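/- (Chaotic iteration theorem underlying the Generic Propagation Algorithm.) Let L be a partial order in which < is well-founded, and let f : ι → L → L be a family of operators each of which is monotone and contracting (f i y ≤ y for all y). Let s : ℕ → ι be a fair schedule and x the run of f along s from x₀. Then there exists N such that: x n = x N for all n ≥ N; x N ≤ x₀; f i (x N) = x N for all i; and x N is the greatest common fixpoint below the start, i.e., every y ∈ L with y ≤ x₀ and f i y = y for all i satisfies y ≤ x N. -/

import Mathlib

/-!
A run of contracting operators decreases, so well-foundedness makes it stationary. By fairness each
operator is applied at some later time, without effect, so the limit is a common fixpoint.
Monotonicity keeps each common fixpoint below `x₀` under every term of the run, hence under the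
limit.
-/

open Filter Function

/-- A schedule is fair if it selects every index infinitely often; over `ℕ` this is the same as
frequently along `atTop`. -/
def IsFairSchedule {ι : Type*} (s : ℕ → ι) : Prop :=
  ∀ i, ∃ᶠ n in atTop, s n = i

/-- The sequence `x` is a run of the operators `f` along the schedule `s`. The start of the run is
`x 0`. -/
def IsRun {L ι : Type*} (f : ι → L → L) (s : ℕ → ι) (x : ℕ → L) : Prop :=
  ∀ n, x (n + 1) = f (s n) (x n)

namespace IsRun

variable {L ι : Type*} {f : ι → L → L} {s : ℕ → ι} {x : ℕ → L}

theorem isFixedPt_of_eventually_eq (hx : IsRun f s x) (hs : IsFairSchedule s) {a : L}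
    (ha : ∀ᶠ n in atTop, x n = a) (i : ι) : IsFixedPt (f i) a := by
  have ha_succ : ∀ᶠ n in atTop, x (n + 1) = a := (tendsto_add_atTop_nat 1).eventually ha
  obtain ⟨n, hi, hn, hn_succ⟩ := ((hs i).and_eventually (ha.and ha_succ)).exists
  calc
    f i a = f (s n) (x n) := by rw [hi, hn]
    _ = x (n + 1) := (hx n).symm
    _ = a := hn_succ

variable [Preorder L]

theorem antitone (hx : IsRun f s x) (hf : ∀ i y, f i y ≤ y) : Antitone x :=
  antitone_nat_of_succ_le fun n => (hx n).trans_le (hf (s n) (x n))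

theorem le_of_le_start (hx : IsRun f s x) (hf : ∀ i, Monotone (f i)) {y : L}
    (hy : ∀ i, y ≤ f i y) (hy_start : y ≤ x 0) (n : ℕ) : y ≤ x n := by
  induction n with
  | zero => exact hy_start
  | succ n ih =>
    calc
      y ≤ f (s n) y := hy (s n)
      _ ≤ f (s n) (x n) := hf (s n) ih
      _ = x (n + 1) := (hx n).symm

end IsRun

/-- Chaotic iteration theorem underlying the Generic Propagation Algorithm:
with `<` well-founded on `L`, monotone and contracting operators `f i`, and a
fair schedule `s`, the run of `f` along `s` from `x₀` stabilizes at the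
greatest common fixpoint of the family below `x₀`. -/
theorem chaotic_iteration {L : Type*} [PartialOrder L] {ι : Type*}
    (hwf : WellFounded ((· < ·) : L → L → Prop))
    (f : ι → L → L) (hmono : ∀ i, Monotone (f i))
    (hcontract : ∀ i, ∀ y : L, f i y ≤ y)
    (s : ℕ → ι) (hfair : ∀ i : ι, ∀ N : ℕ, ∃ n : ℕ, N ≤ n ∧ s n = i)
    (x₀ : L) (x : ℕ → L)
    (hx0 : x 0 = x₀) (hxs : ∀ n, x (n + 1) = f (s n) (x n)) :
    ∃ N : ℕ,
      (∀ n : ℕ, N ≤ n → x n = x N) ∧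
      x N ≤ x₀ ∧
      (∀ i : ι, f i (x N) = x N) ∧
      (∀ y : L, y ≤ x₀ → (∀ i : ι, f i y = y) → y ≤ x N) := by
  have hrun : IsRun f s x := hxs
  have hsched : IsFairSchedule s := fun i => frequently_atTop.2 (hfair i)
  have hanti : Antitone x := hrun.antitone hcontract
  have : WellFoundedLT L := ⟨hwf⟩
  obtain ⟨N, hN⟩ := WellFoundedLT.antitone_chain_condition hanti
  have hstable : ∀ n, N ≤ n → x n = x N := fun n hn => (hN n hn).symm
  subst hx0
  refine ⟨N, hstable, hanti N.zero_le, ?fixed, ?greatest⟩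
  case fixed =>
    exact hrun.isFixedPt_of_eventually_eq hsched (eventually_atTop.2 ⟨N, hstable⟩)
  case greatest =>
    intro y hy hfix
    exact hrun.le_of_le_start hmono (fun i => (hfix i).ge) hy N
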